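/- Let f : [a,b] → E(X,D) be a path with f(a), f(b) ∈ X (i.e. in the copy X × {o}). Then f is homotopic rel endpoints to a proper path, where a path g is proper if g(a), g(b) ∈ X and whenever ⟨u,v⟩ is a component of g^{-1}(E(X,D) \ X) with g(u) = g(v) ∈ X and g(⟨u,v⟩) ∩ X = ∅, the restriction g|[u,v] is either the fixed winding or its reverse on the circle C_d attached at some d ∈ D. -/

import Mathlib

open Classical

noncomputable section

namespace EarringPaper

variable {X : Type*} [MetricSpace X]

/-- The earring space `E(X,D)`: the base copy `X × {o}` together with a copy of the
circle attached at each point `d n` of the countable set `D = range d`. -/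
structure ESp (X : Type*) [MetricSpace X] (d : ℕ+ → X) where
  pt : X × Circle
  mem : pt.2 = 1 ∨ ∃ n : ℕ+, pt.1 = d n

/-- The scaling weight `1/n` at `x = d n` (and `0` off `D`). -/
def wt (d : ℕ+ → X) (x : X) : ℝ :=
  if h : ∃ n : ℕ+, x = d n then 1 / (h.choose : ℝ) else 0

/-- The earring metric `ρ` on `E(X,D)`. -/
def rho (d : ℕ+ → X) (p q : X × Circle) : ℝ :=
  if p.1 = q.1 ∧ ∃ n : ℕ+, p.1 = d n then wt d p.1 * dist p.2 q.2
  else dist p.1 q.1 + wt d p.1 * dist p.2 1 + wt d q.1 * dist q.2 1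

/-- `E(X,D)` carries the topology of the metric `ρ` (generated by the `ρ`-balls). -/
instance (d : ℕ+ → X) : TopologicalSpace (ESp X d) :=
  TopologicalSpace.generateFrom
    {s | ∃ (p : ESp X d) (r : ℝ), s = {q : ESp X d | rho d p.pt q.pt < r}}

/-- The points of the base copy `X × {o}` of `X` inside `E(X,D)`. -/
def InX {d : ℕ+ → X} (p : ESp X d) : Prop := p.pt.2 = 1

/-- The inclusion `X → E(X,D)`, `x ↦ (x,o)`. -/
def emb (d : ℕ+ → X) (x : X) : ESp X d := ⟨(x, 1), Or.inl rfl⟩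

/-- `f` traverses, on `[u,v]`, the fixed winding of the circle attached at `d n`. -/
def IsWinding (d : ℕ+ → X) (f : ℝ → ESp X d) (u v : ℝ) (n : ℕ+) : Prop :=
  ∃ φ : ℝ → ℝ, ContinuousOn φ (Set.Icc u v) ∧ MonotoneOn φ (Set.Icc u v) ∧
    φ u = 0 ∧ φ v = 1 ∧
    ∀ t ∈ Set.Icc u v, (f t).pt = (d n, Circle.exp (2 * Real.pi * φ t))

/-- `f` traverses, on `[u,v]`, the reverse of the fixed winding of the circle at `d n`. -/
def IsRevWinding (d : ℕ+ → X) (f : ℝ → ESp X d) (u v : ℝ) (n : ℕ+) : Prop :=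
  ∃ φ : ℝ → ℝ, ContinuousOn φ (Set.Icc u v) ∧ MonotoneOn φ (Set.Icc u v) ∧
    φ u = 0 ∧ φ v = 1 ∧
    ∀ t ∈ Set.Icc u v, (f t).pt = (d n, Circle.exp (-(2 * Real.pi) * φ t))

/-- A proper path in `E(X,D)` (with domain `[a,b]`): its endpoints lie in `X`, and each
maximal excursion out of `X` returning to the same point is a single winding or reverse
winding of one of the attached circles. -/
def IsProper (d : ℕ+ → X) (f : ℝ → ESp X d) (a b : ℝ) : Prop :=
  ContinuousOn f (Set.Icc a b) ∧ InX (f a) ∧ InX (f b) ∧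
  ∀ u v, a ≤ u → u < v → v ≤ b → InX (f u) → InX (f v) →
    (∀ t ∈ Set.Ioo u v, ¬InX (f t)) → f u = f v →
    ∃ n : ℕ+, IsWinding d f u v n ∨ IsRevWinding d f u v n

/-- Homotopy of paths `[a,b] → E(X,D)` relative to the endpoints. -/
def HtpyRel (d : ℕ+ → X) (f g : ℝ → ESp X d) (a b : ℝ) : Prop :=
  ∃ H : ℝ × ℝ → ESp X d,
    ContinuousOn H (Set.Icc a b ×ˢ Set.Icc (0 : ℝ) 1) ∧
    (∀ s ∈ Set.Icc a b, H (s, 0) = f s ∧ H (s, 1) = g s) ∧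
    (∀ t ∈ Set.Icc (0 : ℝ) 1, H (a, t) = f a ∧ H (b, t) = f b)

/-- `Y` is locally simply connected: every point has a neighborhood basis of simply
connected neighborhoods. -/
def LocSimplyConnected (Y : Type*) [TopologicalSpace Y] : Prop :=
  ∀ y : Y, ∀ U ∈ nhds y, ∃ V ∈ nhds y, V ⊆ U ∧ SimplyConnectedSpace V

end EarringPaper

namespace EarringPaper

open Set Filter Topology

section Metric

lemma wt_nonneg {X : Type*} (d : ℕ+ → X) (x : X) : 0 ≤ wt d x := by
  unfold wt
  split_ifs <;> positivity

lemma wt_pos {X : Type*} {d : ℕ+ → X} {x : X} (h : ∃ n : ℕ+, x = d n) : 0 < wt d x := by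
  unfold wt
  rw [dif_pos h]
  have := h.choose.pos
  positivity

variable {X : Type*} [MetricSpace X] {d : ℕ+ → X}

lemma rho_eq_ite (d : ℕ+ → X) (p q : X × Circle) :
    rho d p q = if p.1 = q.1 then wt d p.1 * dist p.2 q.2
      else dist p.1 q.1 + wt d p.1 * dist p.2 1 + wt d q.1 * dist q.2 1 := by
  unfold rho
  by_cases h : p.1 = q.1
  · by_cases h' : ∃ n : ℕ+, p.1 = d n
    · rw [if_pos ⟨h, h'⟩, if_pos h]
    · have h0 : wt d p.1 = 0 := by unfold wt; rw [dif_neg h']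
      rw [if_neg (fun H => h' H.2), if_pos h, ← h, h0, dist_self]
      ring
  · rw [if_neg (fun H => h H.1), if_neg h]

lemma rho_of_fst_eq {p q : X × Circle} (h : p.1 = q.1) :
    rho d p q = wt d p.1 * dist p.2 q.2 := by
  rw [rho_eq_ite, if_pos h]

lemma rho_of_snd_eq_one {p : X × Circle} (h : p.2 = 1) (q : X × Circle) :
    rho d p q = dist p.1 q.1 + wt d q.1 * dist q.2 1 := by
  rw [rho_eq_ite, h]
  split_ifs with h'
  · rw [h', dist_self, dist_comm, zero_add]
  · rw [dist_self]
    ring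

lemma rho_self (p : X × Circle) : rho d p p = 0 := by
  rw [rho_of_fst_eq rfl, dist_self, mul_zero]

lemma rho_triangle (p q r : X × Circle) : rho d p r ≤ rho d p q + rho d q r := by
  obtain ⟨x, z⟩ := p
  obtain ⟨y, w⟩ := q
  obtain ⟨x', z'⟩ := r
  simp only [rho_eq_ite]
  have hx := wt_nonneg d x
  have hy := wt_nonneg d y
  have hx' := wt_nonneg d x'
  by_cases h1 : x = y
  · subst h1
    by_cases h2 : x = x'
    · subst h2
      simp only [if_true]
      nlinarith [dist_triangle z w z']
    · simp only [h2, if_true, if_false]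
      nlinarith [dist_triangle z w 1]
  · by_cases h2 : y = x'
    · subst h2
      simp only [h1, if_true, if_false]
      nlinarith [dist_triangle z' w 1, dist_comm w z']
    · by_cases h3 : x = x'
      · subst h3
        simp only [h1, h2, if_true, if_false]
        nlinarith [dist_triangle_right z z' 1, dist_nonneg (x := x) (y := y),
          dist_nonneg (x := y) (y := x), mul_nonneg hy (dist_nonneg (x := w) (y := 1))]
      · simp only [h1, h2, h3, if_false]
        nlinarith [dist_triangle x y x', mul_nonneg hy (dist_nonneg (x := w) (y := 1))]

lemma dist_fst_le_rho (p q : X × Circle) : dist p.1 q.1 ≤ rho d p q := by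
  rw [rho_eq_ite]
  split_ifs with h
  · rw [h, dist_self]
    exact mul_nonneg (wt_nonneg _ _) dist_nonneg
  · have h1 := mul_nonneg (wt_nonneg d p.1) (dist_nonneg (x := p.2) (y := 1))
    have h2 := mul_nonneg (wt_nonneg d q.1) (dist_nonneg (x := q.2) (y := 1))
    linarith

lemma tendsto_nhds_iff_rho {α : Type*} {l : Filter α} {F : α → ESp X d} {p : ESp X d} :
    Tendsto F l (𝓝 p) ↔ ∀ ε > 0, ∀ᶠ i in l, rho d p.pt (F i).pt < ε := by
  rw [TopologicalSpace.tendsto_nhds_generateFrom_iff]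
  constructor
  · intro h ε hε
    exact h {q | rho d p.pt q.pt < ε} ⟨p, ε, rfl⟩ (by simpa [rho_self] using hε)
  · rintro h s ⟨c, r, rfl⟩ hp
    filter_upwards [h (r - rho d c.pt p.pt) (sub_pos.2 hp)] with i hi
    have := rho_triangle (d := d) c.pt p.pt (F i).pt
    change rho d c.pt (F i).pt < r
    linarith

/-- Off `X`, a small ball stays in the same circle and off `X`. -/
lemma fst_eq_and_not_inX_of_rho_lt {p q : ESp X d}
    (h : rho d p.pt q.pt < wt d p.pt.1 * dist p.pt.2 1) :
    q.pt.1 = p.pt.1 ∧ ¬InX q := by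
  rw [rho_eq_ite] at h
  split_ifs at h with h'
  · refine ⟨h'.symm, fun hq => ?_⟩
    rw [show q.pt.2 = 1 from hq] at h
    exact lt_irrefl _ h
  · have h2 := mul_nonneg (wt_nonneg d q.pt.1) (dist_nonneg (x := q.pt.2) (y := 1))
    have h3 := dist_nonneg (x := p.pt.1) (y := q.pt.1)
    linarith

lemma wt_mul_dist_pos {p : ESp X d} (h : ¬InX p) : 0 < wt d p.pt.1 * dist p.pt.2 1 :=
  mul_pos (wt_pos (p.mem.resolve_left h)) (dist_pos.2 h)

lemma isClosed_inX : IsClosed {p : ESp X d | InX p} := by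
  rw [← isOpen_compl_iff, isOpen_iff_mem_nhds]
  intro p hp
  have := tendsto_nhds_iff_rho.1 (tendsto_id (x := 𝓝 p)) _ (wt_mul_dist_pos hp)
  filter_upwards [this] with q hq
  exact (fst_eq_and_not_inX_of_rho_lt hq).2

lemma continuous_fst_pt : Continuous fun p : ESp X d => p.pt.1 := by
  rw [continuous_iff_continuousAt]
  intro p
  rw [ContinuousAt, Metric.tendsto_nhds]
  intro ε hε
  filter_upwards [tendsto_nhds_iff_rho.1 (tendsto_id (x := 𝓝 p)) ε hε] with q hq
  rw [dist_comm]
  exact (dist_fst_le_rho _ _).trans_lt hq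

lemma continuousOn_of_pt_eq {α : Type*} [TopologicalSpace α] {F : α → ESp X d} {S : Set α}
    {x : X} {c : α → Circle} (hc : ContinuousOn c S) (hF : ∀ i ∈ S, (F i).pt = (x, c i)) :
    ContinuousOn F S := by
  intro i hi
  refine tendsto_nhds_iff_rho.2 fun ε hε => ?_
  have h : Tendsto (fun j => wt d x * dist (c i) (c j)) (𝓝[S] i)
      (𝓝 (wt d x * dist (c i) (c i))) :=
    (tendsto_const_nhds.dist (hc i hi)).const_mul _
  rw [dist_self, mul_zero] at h
  filter_upwards [h.eventually_lt_const hε, self_mem_nhdsWithin] with j hj hjS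
  rw [hF i hi, hF j hjS, rho_of_fst_eq (by rfl)]
  exact hj

lemma continuousOn_snd_pt {α : Type*} [TopologicalSpace α] {F : α → ESp X d} {S : Set α}
    {x : X} (hx : ∃ n, x = d n) (hF : ContinuousOn F S) (hS : ∀ i ∈ S, (F i).pt.1 = x) :
    ContinuousOn (fun i => (F i).pt.2) S := by
  intro i hi
  have hw := wt_pos hx
  rw [ContinuousWithinAt, Metric.tendsto_nhds]
  intro ε hε
  filter_upwards [tendsto_nhds_iff_rho.1 (hF i hi) (wt d x * ε) (by positivity),
    self_mem_nhdsWithin] with j hj hjS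
  rw [rho_of_fst_eq (by rw [hS i hi, hS j hjS]), hS i hi] at hj
  rw [dist_comm]
  exact lt_of_mul_lt_mul_left hj hw.le

end Metric

section Circle

lemma dist_circle_exp_one (y : ℝ) : dist (Circle.exp y) 1 = 2 * |Real.sin (y / 2)| := by
  change dist (Circle.exp y : ℂ) ((1 : Circle) : ℂ) = _
  rw [Circle.coe_exp, Complex.dist_eq, mul_comm, Circle.coe_one,
    Complex.norm_exp_I_mul_ofReal_sub_one, Real.norm_eq_abs, abs_mul, abs_two]

lemma dist_circle_exp_one_le_two (y : ℝ) : dist (Circle.exp y) 1 ≤ 2 := by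
  rw [dist_circle_exp_one]
  linarith [Real.abs_sin_le_one (y / 2)]

lemma dist_circle_exp_mul_le {t y : ℝ} (ht : t ∈ Icc (0 : ℝ) 1) (hy : |y| ≤ Real.pi) :
    dist (Circle.exp (t * y)) 1 ≤ dist (Circle.exp y) 1 := by
  have habs : ∀ z : ℝ, |z| ≤ Real.pi → |Real.sin (z / 2)| = Real.sin (|z| / 2) := by
    intro z hz
    rw [Real.abs_sin_eq_sin_abs_of_abs_le_pi, abs_div, abs_two]
    rw [abs_div, abs_two]
    linarith [abs_nonneg z]
  have hty : |t * y| ≤ |y| := by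
    rw [abs_mul, abs_of_nonneg ht.1]
    exact mul_le_of_le_one_left (abs_nonneg _) ht.2
  rw [dist_circle_exp_one, dist_circle_exp_one, habs _ hy, habs _ (hty.trans hy)]
  have := Real.sin_le_sin_of_le_of_le_pi_div_two (x := |t * y| / 2) (y := |y| / 2)
    (by linarith [abs_nonneg (t * y), Real.pi_pos]) (by linarith) (by linarith)
  linarith

/-- Path lifting for the exponential covering of the circle, over a real interval. -/
lemma exists_lift_circle {c : ℝ → Circle} {u v : ℝ} (huv : u ≤ v)
    (hc : ContinuousOn c (Icc u v)) (hu : c u = 1) :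
    ∃ L : ℝ → ℝ, ContinuousOn L (Icc u v) ∧ L u = 0 ∧
      ∀ s ∈ Icc u v, c s = Circle.exp (L s) := by
  have : SimplyConnectedSpace ℝ := SimplyConnectedSpace.ofContractible ℝ
  obtain ⟨F, ⟨hF0, hF⟩, -⟩ := Circle.isCoveringMap_exp.existsUnique_continuousMap_lifts
    (⟨IccExtend huv ((Icc u v).domRestrict c),
      (continuousOn_iff_continuous_domRestrict.1 hc).Icc_extend'⟩ : C(ℝ, Circle)) u 0
    (by
      rw [Circle.exp_zero]
      exact ((IccExtend_of_mem huv ((Icc u v).domRestrict c) ⟨le_rfl, huv⟩).trans hu).symm)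
  refine ⟨F, F.continuous.continuousOn, hF0, fun s hs => ?_⟩
  exact ((congrFun hF s).trans
    (IccExtend_of_mem huv ((Icc u v).domRestrict c) hs)).symm

/-- A lifted loop that avoids the base point in its interior winds at most once. -/
lemma lift_endpoint_cases {L : ℝ → ℝ} {u v : ℝ} (huv : u ≤ v) (hL : ContinuousOn L (Icc u v))
    (hu : L u = 0) (hv : Circle.exp (L v) = 1)
    (hne : ∀ s ∈ Ioo u v, Circle.exp (L s) ≠ 1) :
    L v = 0 ∨ L v = 2 * Real.pi ∨ L v = -(2 * Real.pi) := by
  obtain ⟨k, hk⟩ := Circle.exp_eq_one.1 hv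
  have hpi := Real.pi_pos
  have hk1 : k ≤ 1 := by
    by_contra! h
    have h2 : (2 : ℝ) ≤ k := by exact_mod_cast h
    obtain ⟨s, hs, hs'⟩ := intermediate_value_Ioo huv hL
      (show 2 * Real.pi ∈ Ioo (L u) (L v) by
        rw [hu, hk]
        constructor <;> nlinarith)
    exact hne s hs (Circle.exp_eq_one.2 ⟨1, by simp [hs']⟩)
  have hk2 : -1 ≤ k := by
    by_contra! h
    have h2 : (k : ℝ) ≤ -2 := by exact_mod_cast (by omega : k ≤ -2)
    obtain ⟨s, hs, hs'⟩ := intermediate_value_Ioo' huv hL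
      (show -(2 * Real.pi) ∈ Ioo (L v) (L u) by
        rw [hu, hk]
        constructor <;> nlinarith)
    exact hne s hs (Circle.exp_eq_one.2 ⟨-1, by simp [hs']⟩)
  have : k = 0 ∨ k = 1 ∨ k = -1 := by omega
  rcases this with rfl | rfl | rfl
  · left; simpa using hk
  · right; left; simpa using hk
  · right; right; simpa using hk

/-- A lifted loop that misses the antipode of the base point has lift bounded by `π`, and
closes up. -/
lemma lift_small {L : ℝ → ℝ} {u v : ℝ} (huv : u ≤ v) (hL : ContinuousOn L (Icc u v))
    (hu : L u = 0) (hv : Circle.exp (L v) = 1)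
    (hlt : ∀ s ∈ Icc u v, dist (Circle.exp (L s)) 1 < 2) :
    L v = 0 ∧ ∀ s ∈ Icc u v, |L s| ≤ Real.pi := by
  have hpi := Real.pi_pos
  have hb : ∀ s ∈ Icc u v, |L s| < Real.pi := by
    intro s hs
    by_contra! h
    obtain ⟨r, hr, hr'⟩ := intermediate_value_Icc hs.1
      ((hL.mono (Icc_subset_Icc_right hs.2)).abs) (show Real.pi ∈ Icc |L u| |L s| by
        rw [hu, abs_zero]
        exact ⟨hpi.le, h⟩)
    have h2 := hlt r ⟨hr.1, hr.2.trans hs.2⟩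
    rw [dist_circle_exp_one] at h2
    have h1 : |Real.sin (L r / 2)| = 1 := by
      rcases (abs_eq hpi.le).1 hr' with h | h <;> rw [h]
      · simp
      · rw [neg_div, Real.sin_neg]; simp
    rw [h1] at h2
    norm_num at h2
  refine ⟨?_, fun s hs => (hb s hs).le⟩
  obtain ⟨k, hk⟩ := Circle.exp_eq_one.1 hv
  have h := hb v ⟨huv, le_rfl⟩
  rw [hk, abs_lt] at h
  have hk1 : (k : ℝ) < 1 := by nlinarith
  have hk2 : (-1 : ℝ) < k := by nlinarith
  have h1 : k < 1 := by exact_mod_cast hk1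
  have h2 : -1 < k := by exact_mod_cast hk2
  have : k = 0 := by omega
  simpa [this] using hk

end Circle

section Excursion

variable {X : Type*} [MetricSpace X] {d : ℕ+ → X}

/-- The interval `⟨u,v⟩` is a component of the set of times at which `f` is off `X`. -/
structure IsExcursion (f : ℝ → ESp X d) (u v : ℝ) : Prop where
  lt : u < v
  left : InX (f u)
  right : InX (f v)
  not_inX : ∀ t ∈ Ioo u v, ¬InX (f t)

lemma IsExcursion.eq_of_mem {f : ℝ → ESp X d} {u v u' v' s : ℝ} (h : IsExcursion f u v)
    (h' : IsExcursion f u' v') (hs : s ∈ Ioo u v) (hs' : s ∈ Ioo u' v') : u = u' ∧ v = v' := by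
  constructor
  · rcases lt_trichotomy u u' with hlt | heq | hlt
    · exact absurd h'.left (h.not_inX _ ⟨hlt, hs'.1.trans hs.2⟩)
    · exact heq
    · exact absurd h.left (h'.not_inX _ ⟨hlt, hs.1.trans hs'.2⟩)
  · rcases lt_trichotomy v v' with hlt | heq | hlt
    · exact absurd h.right (h'.not_inX _ ⟨hs'.1.trans hs.2, hlt⟩)
    · exact heq
    · exact absurd h'.right (h.not_inX _ ⟨hs.1.trans hs'.2, hlt⟩)

lemma exists_isExcursion {f : ℝ → ESp X d} {a b s : ℝ} (hf : ContinuousOn f (Icc a b))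
    (ha : InX (f a)) (hb : InX (f b)) (hs : s ∈ Icc a b) (hsX : ¬InX (f s)) :
    ∃ u v, a ≤ u ∧ v ≤ b ∧ IsExcursion f u v ∧ s ∈ Ioo u v := by
  have hl : IsCompact (Icc a s ∩ f ⁻¹' {p | InX p}) :=
    isCompact_Icc.of_isClosed_subset
      ((hf.mono (Icc_subset_Icc_right hs.2)).preimage_isClosed_of_isClosed isClosed_Icc
        isClosed_inX) inter_subset_left
  have hr : IsCompact (Icc s b ∩ f ⁻¹' {p | InX p}) :=
    isCompact_Icc.of_isClosed_subset
      ((hf.mono (Icc_subset_Icc_left hs.1)).preimage_isClosed_of_isClosed isClosed_Icc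
        isClosed_inX) inter_subset_left
  obtain ⟨u, ⟨hu, huX⟩, hmax⟩ := hl.exists_isGreatest ⟨a, ⟨le_rfl, hs.1⟩, ha⟩
  obtain ⟨v, ⟨hv, hvX⟩, hmin⟩ := hr.exists_isLeast ⟨b, ⟨hs.2, le_rfl⟩, hb⟩
  have hus : u < s := hu.2.lt_of_ne (fun h => hsX (h ▸ huX))
  have hsv : s < v := hv.1.lt_of_ne (fun h => hsX (h ▸ hvX))
  refine ⟨u, v, hu.1, hv.2, ⟨hus.trans hsv, huX, hvX, fun t ht htX => ?_⟩, hus, hsv⟩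
  rcases le_total t s with h | h
  · exact (hmax ⟨⟨hu.1.trans ht.1.le, h⟩, htX⟩).not_gt ht.1
  · exact (hmin ⟨⟨h, ht.2.le.trans hv.2⟩, htX⟩).not_gt ht.2

/-- During an excursion the path stays in a single circle. -/
lemma IsExcursion.exists_fst_eq {f : ℝ → ESp X d} {u v : ℝ} (h : IsExcursion f u v)
    (hf : ContinuousOn f (Icc u v)) :
    ∃ n : ℕ+, ∀ s ∈ Icc u v, (f s).pt.1 = d n := by
  have hm : (u + v) / 2 ∈ Ioo u v := ⟨by linarith [h.lt], by linarith [h.lt]⟩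
  obtain ⟨n, hn⟩ := (f ((u + v) / 2)).mem.resolve_left (h.not_inX _ hm)
  have : PreconnectedSpace (Ioo u v) := Subtype.preconnectedSpace isPreconnected_Ioo
  have hloc : IsLocallyConstant fun s : Ioo u v => (f s).pt.1 := by
    rw [IsLocallyConstant.iff_eventually_eq]
    intro s
    have hc : ContinuousAt (fun s : Ioo u v => f s) s :=
      (continuousOn_iff_continuous_domRestrict.1 (hf.mono Ioo_subset_Icc_self)).continuousAt
    filter_upwards [tendsto_nhds_iff_rho.1 hc _ (wt_mul_dist_pos (h.not_inX _ s.2))] with t ht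
    exact (fst_eq_and_not_inX_of_rho_lt ht).1
  have hIoo : EqOn (fun s => (f s).pt.1) (fun _ => d n) (Ioo u v) := fun s hs =>
    (hloc.apply_eq_of_preconnectedSpace ⟨s, hs⟩ ⟨_, hm⟩).trans hn
  refine ⟨n, hIoo.of_subset_closure (continuous_fst_pt.comp_continuousOn hf) continuousOn_const
    Ioo_subset_Icc_self ?_⟩
  rw [closure_Ioo h.lt.ne]

/-- `L` is an angle function for `f` along the excursion `⟨u,v⟩` into the circle at `d n`. -/
structure IsAngle (f : ℝ → ESp X d) (u v : ℝ) (n : ℕ+) (L : ℝ → ℝ) : Prop where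
  continuousOn : ContinuousOn L (Icc u v)
  left : L u = 0
  pt_eq : ∀ s ∈ Icc u v, (f s).pt = (d n, Circle.exp (L s))

lemma IsExcursion.exists_isAngle {f : ℝ → ESp X d} {u v : ℝ} (h : IsExcursion f u v)
    (hf : ContinuousOn f (Icc u v)) : ∃ n L, IsAngle f u v n L := by
  obtain ⟨n, hn⟩ := h.exists_fst_eq hf
  obtain ⟨L, hL, hLu, hLs⟩ := exists_lift_circle h.lt.le (continuousOn_snd_pt ⟨n, rfl⟩ hf hn)
    h.left
  exact ⟨n, L, hL, hLu, fun s hs => Prod.ext (hn s hs) (hLs s hs)⟩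

lemma IsAngle.exp_right {f : ℝ → ESp X d} {u v : ℝ} {n : ℕ+} {L : ℝ → ℝ}
    (hL : IsAngle f u v n L) (h : IsExcursion f u v) : Circle.exp (L v) = 1 := by
  have := h.right
  rwa [InX, hL.pt_eq v ⟨h.lt.le, le_rfl⟩] at this

lemma IsAngle.right_cases {f : ℝ → ESp X d} {u v : ℝ} {n : ℕ+} {L : ℝ → ℝ}
    (hL : IsAngle f u v n L) (h : IsExcursion f u v) :
    L v = 0 ∨ L v = 2 * Real.pi ∨ L v = -(2 * Real.pi) := by
  refine lift_endpoint_cases h.lt.le hL.continuousOn hL.left (hL.exp_right h) fun s hs hs1 => ?_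
  refine h.not_inX s hs ?_
  rw [InX, hL.pt_eq s (Ioo_subset_Icc_self hs)]
  exact hs1

/-- The linear interpolation, at parameter `t`, between the angle function `L` and the
affine function with the same values at `u` and `v`, when `L u = 0`. -/
def angleHomotopy (L : ℝ → ℝ) (u v s t : ℝ) : ℝ :=
  (1 - t) * L s + t * (L v * ((s - u) / (v - u)))

lemma angleHomotopy_left {L : ℝ → ℝ} {u v t : ℝ} (h : L u = 0) :
    angleHomotopy L u v u t = 0 := by
  simp [angleHomotopy, h]

lemma angleHomotopy_right {L : ℝ → ℝ} {u v t : ℝ} (h : u < v) :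
    angleHomotopy L u v v t = L v := by
  rw [angleHomotopy, div_self (sub_pos.2 h).ne']
  ring

/-- `H` fixes the times at which `f` is in `X` and straightens every excursion of `f`. -/
structure IsStraightening (f : ℝ → ESp X d) (a b : ℝ) (H : ℝ × ℝ → ESp X d) : Prop where
  eq_of_inX : ∀ s t, InX (f s) → H (s, t) = f s
  exists_isAngle : ∀ u v, a ≤ u → v ≤ b → IsExcursion f u v → ∃ n L, IsAngle f u v n L ∧
    ∀ s ∈ Icc u v, ∀ t, (H (s, t)).pt = (d n, Circle.exp (angleHomotopy L u v s t))

lemma exists_isStraightening {f : ℝ → ESp X d} {a b : ℝ} (hf : ContinuousOn f (Icc a b)) :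
    ∃ H, IsStraightening f a b H := by
  have hA : ∀ u v, ∃ (n : ℕ+) (L : ℝ → ℝ), a ≤ u → v ≤ b → IsExcursion f u v →
      IsAngle f u v n L := by
    intro u v
    by_cases h : a ≤ u ∧ v ≤ b ∧ IsExcursion f u v
    · obtain ⟨n, L, hL⟩ := h.2.2.exists_isAngle (hf.mono (Icc_subset_Icc h.1 h.2.1))
      exact ⟨n, L, fun _ _ _ => hL⟩
    · exact ⟨1, 0, fun h1 h2 h3 => absurd ⟨h1, h2, h3⟩ h⟩
  choose N L hL using hA
  have hH : ∀ q : ℝ × ℝ, ∃ y : ESp X d, (InX (f q.1) → y = f q.1) ∧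
      ∀ u v, a ≤ u → v ≤ b → IsExcursion f u v → q.1 ∈ Icc u v →
        y.pt = (d (N u v), Circle.exp (angleHomotopy (L u v) u v q.1 q.2)) := by
    rintro ⟨s, t⟩
    by_cases hsX : InX (f s)
    · refine ⟨f s, fun _ => rfl, fun u v hau hvb he hs => ?_⟩
      have hLuv := hL u v hau hvb he
      rw [hLuv.pt_eq s hs]
      have : s = u ∨ s = v := by
        by_contra! hne
        exact he.not_inX s ⟨hs.1.lt_of_ne hne.1.symm, hs.2.lt_of_ne hne.2⟩ hsX
      rcases this with rfl | rfl
      · rw [angleHomotopy_left hLuv.left, hLuv.left]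
      · rw [angleHomotopy_right he.lt]
    · have hmem : ∀ u v, IsExcursion f u v → s ∈ Icc u v → s ∈ Ioo u v := fun u v he hs =>
        ⟨hs.1.lt_of_ne (fun h => hsX (h ▸ he.left)), hs.2.lt_of_ne (fun h => hsX (h ▸ he.right))⟩
      by_cases hex : ∃ u v, a ≤ u ∧ v ≤ b ∧ IsExcursion f u v ∧ s ∈ Icc u v
      · obtain ⟨u, v, hau, hvb, he, hs⟩ := hex
        refine ⟨⟨(d (N u v), Circle.exp (angleHomotopy (L u v) u v s t)), Or.inr ⟨_, rfl⟩⟩,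
          fun h => absurd h hsX, fun u' v' _ _ he' hs' => ?_⟩
        obtain ⟨rfl, rfl⟩ := he.eq_of_mem he' (hmem u v he hs) (hmem u' v' he' hs')
        rfl
      · exact ⟨f s, fun _ => rfl, fun u v hau hvb he hs =>
          absurd ⟨u, v, hau, hvb, he, hs⟩ hex⟩
  choose H hHX hHe using hH
  exact ⟨H, fun s t => hHX (s, t), fun u v hau hvb he => ⟨N u v, L u v, hL u v hau hvb he,
    fun s hs t => hHe (s, t) u v hau hvb he hs⟩⟩

variable {f : ℝ → ESp X d} {a b : ℝ} {H : ℝ × ℝ → ESp X d}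

lemma IsStraightening.continuousOn_excursion (hH : IsStraightening f a b H) {u v : ℝ}
    (hau : a ≤ u) (hvb : v ≤ b) (he : IsExcursion f u v) :
    ContinuousOn H (Icc u v ×ˢ univ) := by
  obtain ⟨n, L, hL, hHL⟩ := hH.exists_isAngle u v hau hvb he
  refine continuousOn_of_pt_eq (x := d n)
    (c := fun q => Circle.exp (angleHomotopy L u v q.1 q.2)) ?_ fun q hq => hHL q.1 hq.1 q.2
  refine Circle.exp.continuous.comp_continuousOn ?_
  have hL' : ContinuousOn (fun q : ℝ × ℝ => L q.1) (Icc u v ×ˢ univ) :=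
    hL.continuousOn.comp continuousOn_fst fun q hq => hq.1
  have h1 : Continuous fun q : ℝ × ℝ => 1 - q.2 := by fun_prop
  have h2 : Continuous fun q : ℝ × ℝ => q.2 * (L v * ((q.1 - u) / (v - u))) := by fun_prop
  exact (h1.continuousOn.mul hL').add h2.continuousOn

/-- If `f` stays `ε`-close to a point of `X` between two times in `X`, then its
straightening stays `2ε`-close. -/
lemma IsStraightening.rho_lt (hH : IsStraightening f a b H) (hf : ContinuousOn f (Icc a b))
    {p : ESp X d} (hp : InX p) {l r ε : ℝ} (hal : a ≤ l) (hrb : r ≤ b) (hl : InX (f l))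
    (hr : InX (f r)) (hε : ∀ s ∈ Icc l r, rho d p.pt (f s).pt < ε) {s t : ℝ}
    (hs : s ∈ Icc l r) (ht : t ∈ Icc (0 : ℝ) 1) : rho d p.pt (H (s, t)).pt < 2 * ε := by
  have hε0 : 0 ≤ ε := by
    have h1 := hε s hs
    have h2 := dist_fst_le_rho (d := d) p.pt (f s).pt
    linarith [dist_nonneg (x := p.pt.1) (y := (f s).pt.1)]
  by_cases hsX : InX (f s)
  · rw [hH.eq_of_inX s t hsX]
    linarith [hε s hs]
  obtain ⟨u, v, hlu, hvr, he, hsuv⟩ :=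
    exists_isExcursion (hf.mono (Icc_subset_Icc hal hrb)) hl hr hs hsX
  obtain ⟨n, L, hL, hHL⟩ := hH.exists_isAngle u v (hal.trans hlu) (hvr.trans hrb) he
  have hs' := Ioo_subset_Icc_self hsuv
  have hε' : ∀ s ∈ Icc u v, dist p.pt.1 (d n) +
      wt d (d n) * dist (Circle.exp (L s)) 1 < ε := by
    intro s hs
    have := hε s ⟨hlu.trans hs.1, hs.2.trans hvr⟩
    rwa [rho_of_snd_eq_one hp, hL.pt_eq s hs] at this
  rw [rho_of_snd_eq_one hp, hHL s hs' t]
  change dist p.pt.1 (d n) +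
    wt d (d n) * dist (Circle.exp (angleHomotopy L u v s t)) 1 < 2 * ε
  have hw := wt_nonneg d (d n)
  by_cases hlt : ∀ s ∈ Icc u v, dist (Circle.exp (L s)) 1 < 2
  · obtain ⟨hLv, hLpi⟩ := lift_small he.lt.le hL.continuousOn hL.left (hL.exp_right he) hlt
    have h1 := dist_circle_exp_mul_le (t := 1 - t) ⟨by linarith [ht.2], by linarith [ht.1]⟩
      (hLpi s hs')
    have h2 : angleHomotopy L u v s t = (1 - t) * L s := by
      rw [angleHomotopy, hLv]
      ring
    rw [h2]
    linarith [mul_le_mul_of_nonneg_left h1 hw, hε' s hs']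
  · push Not at hlt
    obtain ⟨r', hr', h2⟩ := hlt
    have h1 := dist_circle_exp_one_le_two (angleHomotopy L u v s t)
    linarith [mul_le_mul_of_nonneg_left (h1.trans h2) hw, hε' r' hr',
      dist_nonneg (x := p.pt.1) (y := d n)]

lemma IsStraightening.continuousOn (hH : IsStraightening f a b H)
    (hf : ContinuousOn f (Icc a b)) (ha : InX (f a)) (hb : InX (f b)) :
    ContinuousOn H (Icc a b ×ˢ Icc (0 : ℝ) 1) := by
  rintro ⟨s₀, t₀⟩ ⟨hs₀, -⟩
  change s₀ ∈ Icc a b at hs₀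
  by_cases hX : InX (f s₀)
  swap
  · obtain ⟨u, v, hau, hvb, he, hs⟩ := exists_isExcursion hf ha hb hs₀ hX
    exact ((hH.continuousOn_excursion hau hvb he).continuousAt
      (prod_mem_nhds (Icc_mem_nhds hs.1 hs.2) univ_mem)).continuousWithinAt
  refine tendsto_nhds_iff_rho.2 fun ε hε => ?_
  rw [hH.eq_of_inX s₀ t₀ hX]
  obtain ⟨δ, hδ, hfδ⟩ : ∃ δ > 0, ∀ s ∈ Icc a b, |s - s₀| < δ →
      rho d (f s₀).pt (f s).pt < ε / 2 := by
    have := tendsto_nhds_iff_rho.1 (hf s₀ hs₀) (ε / 2) (half_pos hε)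
    obtain ⟨δ, hδ, h⟩ := Metric.mem_nhdsWithin_iff.1 this
    exact ⟨δ, hδ, fun s hs hsδ => h ⟨hsδ, hs⟩⟩
  have hexc : ∀ u v, a ≤ u → v ≤ b → IsExcursion f u v → s₀ ∈ Icc u v →
      ∀ᶠ q : ℝ × ℝ in 𝓝 (s₀, t₀), q.1 ∈ Icc u v → rho d (f s₀).pt (H q).pt < ε := by
    intro u v hau hvb he hs
    have h := tendsto_nhds_iff_rho.1
      (hH.continuousOn_excursion hau hvb he (s₀, t₀) ⟨hs, mem_univ _⟩) ε hε
    rw [hH.eq_of_inX s₀ t₀ hX, eventually_nhdsWithin_iff] at h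
    filter_upwards [h] with q hq hq'
    exact hq ⟨hq', mem_univ _⟩
  have hright : ∀ᶠ q : ℝ × ℝ in 𝓝 (s₀, t₀), q.1 ∈ Icc s₀ b → q.2 ∈ Icc (0 : ℝ) 1 →
      rho d (f s₀).pt (H q).pt < ε := by
    rcases hs₀.2.eq_or_lt with heq | hlt
    · refine Eventually.of_forall fun q hq _ => ?_
      have : q = (s₀, q.2) := Prod.ext (le_antisymm (heq ▸ hq.2) hq.1) rfl
      rw [this, hH.eq_of_inX _ _ hX, rho_self]
      exact hε
    by_cases hr : ∃ r ∈ Ioo s₀ (s₀ + δ), r ≤ b ∧ InX (f r)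
    · obtain ⟨r, hr, hrb, hrX⟩ := hr
      filter_upwards [continuous_fst.continuousAt.eventually_lt_const hr.1] with q hq hqb hq2
      have := hH.rho_lt hf hX hs₀.1 hrb hX hrX (ε := ε / 2) (fun s hs => hfδ s
        ⟨hs₀.1.trans hs.1, hs.2.trans hrb⟩ (by
          rw [abs_of_nonneg (sub_nonneg.2 hs.1)]
          linarith [hs.2, hr.2])) ⟨hqb.1, hq.le⟩ hq2
      rwa [mul_div_cancel₀ ε two_ne_zero] at this
    · push Not at hr
      obtain ⟨s, hs, hs'⟩ := exists_between (lt_min hlt (lt_add_of_pos_right s₀ hδ))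
      rw [lt_min_iff] at hs'
      obtain ⟨u, v, hu, hvb, he, hsuv⟩ := exists_isExcursion
        (hf.mono (Icc_subset_Icc_left hs₀.1)) hX hb ⟨hs.le, hs'.1.le⟩
        (hr s ⟨hs, hs'.2⟩ hs'.1.le)
      have hus : u = s₀ := by
        by_contra hne
        exact hr u ⟨lt_of_le_of_ne hu (Ne.symm hne), hsuv.1.trans hs'.2⟩
          (hsuv.1.le.trans hs'.1.le) he.left
      subst hus
      filter_upwards [hexc u v hs₀.1 hvb he ⟨le_rfl, he.lt.le⟩,
        continuous_fst.continuousAt.eventually_lt_const he.lt] with q hq hqv hqb _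
      exact hq ⟨hqb.1, hqv.le⟩
  have hleft : ∀ᶠ q : ℝ × ℝ in 𝓝 (s₀, t₀), q.1 ∈ Icc a s₀ → q.2 ∈ Icc (0 : ℝ) 1 →
      rho d (f s₀).pt (H q).pt < ε := by
    rcases hs₀.1.eq_or_lt with heq | hlt
    · refine Eventually.of_forall fun q hq _ => ?_
      have : q = (s₀, q.2) := Prod.ext (le_antisymm hq.2 (heq ▸ hq.1)) rfl
      rw [this, hH.eq_of_inX _ _ hX, rho_self]
      exact hε
    by_cases hr : ∃ r ∈ Ioo (s₀ - δ) s₀, a ≤ r ∧ InX (f r)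
    · obtain ⟨r, hr, har, hrX⟩ := hr
      filter_upwards [continuous_fst.continuousAt.eventually_const_lt hr.2] with q hq hqb hq2
      have := hH.rho_lt hf hX har hs₀.2 hrX hX (ε := ε / 2) (fun s hs => hfδ s
        ⟨har.trans hs.1, hs.2.trans hs₀.2⟩ (by
          rw [abs_of_nonpos (sub_nonpos.2 hs.2)]
          linarith [hs.1, hr.1])) ⟨hq.le, hqb.2⟩ hq2
      rwa [mul_div_cancel₀ ε two_ne_zero] at this
    · push Not at hr
      obtain ⟨s, hs, hs'⟩ := exists_between (max_lt hlt (sub_lt_self s₀ hδ))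
      rw [max_lt_iff] at hs
      obtain ⟨u, v, hau, hv, he, hsuv⟩ := exists_isExcursion
        (hf.mono (Icc_subset_Icc_right hs₀.2)) ha hX ⟨hs.1.le, hs'.le⟩
        (hr s ⟨hs.2, hs'⟩ hs.1.le)
      have hvs : v = s₀ := by
        by_contra hne
        exact hr v ⟨hs.2.trans hsuv.2, lt_of_le_of_ne hv hne⟩
          (hs.1.le.trans hsuv.2.le) he.right
      subst hvs
      filter_upwards [hexc u v hau hs₀.2 he ⟨he.lt.le, le_rfl⟩,
        continuous_fst.continuousAt.eventually_const_lt he.lt] with q hq hqv hqb _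
      exact hq ⟨hqv.le, hqb.2⟩
  rw [eventually_nhdsWithin_iff]
  filter_upwards [hright, hleft] with q hqr hql hq
  rcases le_total s₀ q.1 with h | h
  · exact hqr ⟨h, hq.1.2⟩ hq.2
  · exact hql ⟨hq.1.1, h⟩ hq.2

/-- An excursion of the straightened path is a single winding or reverse winding. -/
lemma IsStraightening.isWinding_or_isRevWinding (hH : IsStraightening f a b H)
    (hf : ContinuousOn f (Icc a b)) (ha : InX (f a)) (hb : InX (f b)) {u v : ℝ} (hau : a ≤ u)
    (hvb : v ≤ b) (he : IsExcursion (fun s => H (s, 1)) u v) :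
    ∃ n : ℕ+, IsWinding d (fun s => H (s, 1)) u v n ∨
      IsRevWinding d (fun s => H (s, 1)) u v n := by
  have hfX : ∀ s ∈ Ioo u v, ¬InX (f s) := fun s hs hsX =>
    he.not_inX s hs ((congrArg InX (hH.eq_of_inX s 1 hsX)).mpr hsX)
  obtain ⟨m, hm⟩ := exists_between he.lt
  obtain ⟨u', v', hau', hvb', he', hm'⟩ := exists_isExcursion hf ha hb
    ⟨hau.trans hm.1.le, hm.2.le.trans hvb⟩ (hfX m hm)
  obtain ⟨n, L, hL, hHL⟩ := hH.exists_isAngle u' v' hau' hvb' he'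
  have hpos : 0 < v' - u' := sub_pos.2 he'.lt
  have hHL1 : ∀ s ∈ Icc u' v', (H (s, 1)).pt =
      (d n, Circle.exp (L v' * ((s - u') / (v' - u')))) := by
    intro s hs
    rw [hHL s hs 1, angleHomotopy]
    congr 2
    ring
  have hLv : L v' = 2 * Real.pi ∨ L v' = -(2 * Real.pi) := by
    refine (hL.right_cases he').resolve_left fun h0 => he.not_inX m hm ?_
    change (H (m, 1)).pt.2 = 1
    rw [hHL1 m (Ioo_subset_Icc_self hm'), h0]
    simp
  have hne : ∀ s ∈ Ioo u' v', ¬InX (H (s, 1)) := by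
    intro s hs hsX
    rw [InX, hHL1 s (Ioo_subset_Icc_self hs)] at hsX
    obtain ⟨k, hk⟩ := Circle.exp_eq_one.1 hsX
    have h0 : 0 < (s - u') / (v' - u') := div_pos (sub_pos.2 hs.1) hpos
    have h1 : (s - u') / (v' - u') < 1 := (div_lt_one hpos).2 (by linarith [hs.2])
    have hpi := Real.two_pi_pos
    rcases hLv with h | h <;> rw [h] at hk
    · have hk' : (k : ℝ) = (s - u') / (v' - u') :=
        mul_right_cancel₀ hpi.ne' (by linarith)
      rw [← hk'] at h0 h1
      have h0' : 0 < k := by exact_mod_cast h0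
      have h1' : k < 1 := by exact_mod_cast h1
      omega
    · have hk' : ((-k : ℤ) : ℝ) = (s - u') / (v' - u') :=
        mul_right_cancel₀ hpi.ne' (by push_cast; linarith)
      rw [← hk'] at h0 h1
      have h0' : 0 < -k := by exact_mod_cast h0
      have h1' : -k < 1 := by exact_mod_cast h1
      omega
  have he'' : IsExcursion (fun s => H (s, 1)) u' v' :=
    ⟨he'.lt, (congrArg InX (hH.eq_of_inX u' 1 he'.left)).mpr he'.left,
      (congrArg InX (hH.eq_of_inX v' 1 he'.right)).mpr he'.right, hne⟩
  obtain ⟨rfl, rfl⟩ := he.eq_of_mem he'' hm hm'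
  have hφ : ContinuousOn (fun s => (s - u) / (v - u)) (Icc u v) := by fun_prop
  have hφm : MonotoneOn (fun s => (s - u) / (v - u)) (Icc u v) := fun s _ t _ hst =>
    div_le_div_of_nonneg_right (by linarith) hpos.le
  have hφu : (u - u) / (v - u) = 0 := by simp
  have hφv : (v - u) / (v - u) = 1 := div_self hpos.ne'
  refine ⟨n, hLv.imp (fun h => ?_) (fun h => ?_)⟩
  · exact ⟨_, hφ, hφm, hφu, hφv, fun s hs => by rw [hHL1 s hs, h]⟩
  · exact ⟨_, hφ, hφm, hφu, hφv, fun s hs => by rw [hHL1 s hs, h]⟩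

end Excursion

/-- Every path in `E(X,D)` with endpoints in `X` is homotopic rel endpoints to a proper
path. -/
theorem exists_proper_path {X : Type*} [MetricSpace X] (d : ℕ+ → X)
    (f : ℝ → ESp X d) (a b : ℝ) (hab : a ≤ b)
    (hf : ContinuousOn f (Set.Icc a b)) (ha : InX (f a)) (hb : InX (f b)) :
    ∃ g : ℝ → ESp X d, IsProper d g a b ∧ g a = f a ∧ g b = f b ∧
      HtpyRel d f g a b := by
  obtain ⟨H, hH⟩ := exists_isStraightening hf
  have hHc := hH.continuousOn hf ha hb
  have hHa := fun t => hH.eq_of_inX a t ha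
  have hHb := fun t => hH.eq_of_inX b t hb
  have hH0 : ∀ s ∈ Icc a b, H (s, 0) = f s := by
    intro s hs
    by_cases hsX : InX (f s)
    · exact hH.eq_of_inX s 0 hsX
    obtain ⟨u, v, hau, hvb, he, hsuv⟩ := exists_isExcursion hf ha hb hs hsX
    obtain ⟨n, L, hL, hHL⟩ := hH.exists_isAngle u v hau hvb he
    have hs' := Ioo_subset_Icc_self hsuv
    have hpt : (H (s, 0)).pt = (f s).pt := by
      rw [hHL s hs' 0, hL.pt_eq s hs', angleHomotopy]
      simp
    cases hy : H (s, 0)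
    cases hz : f s
    rw [hy, hz] at hpt
    cases hpt
    rfl
  refine ⟨fun s => H (s, 1), ⟨?_, ?_, ?_, ?_⟩, hHa 1, hHb 1, H, hHc,
    fun s hs => ⟨hH0 s hs, rfl⟩, fun t _ => ⟨hHa t, hHb t⟩⟩
  · exact hHc.comp (by fun_prop) fun s hs => ⟨hs, zero_le_one, le_rfl⟩
  · exact (congrArg InX (hHa 1)).mpr ha
  · exact (congrArg InX (hHb 1)).mpr hb
  · intro u v hau huv hvb hu hv hne _
    exact hH.isWinding_or_isRevWinding hf ha hb hau hvb ⟨huv, hu, hv, hne⟩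

end EarringPaper
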